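/- arXiv:1907.03852 — 5 statements merged into one kernel-verified Lean document; each statement's English description precedes it below -/
import Mathlib

section
/- Under the abstract Hodge–Laplace setting with two nested discrete subcomplexes (level ℓ contained in level ℓ+1), let (σ_ℓ,u_ℓ) and (σ_{ℓ+1},u_{ℓ+1}) be the discrete mixed solutions with datum f on levels ℓ and ℓ+1, let π_ℓ be a cochain projection onto the level-ℓ subcomplex, and suppose the discrete inf-sup condition holds on level ℓ+1 with constant C_{infsup,ℓ+1} > 0. Then C_{infsup,ℓ+1}·(‖σ_{ℓ+1}−σ_ℓ‖_{V_𝒞} + ‖u_{ℓ+1}−u_ℓ‖_V) ≤ sup_{τ ∈ V_{ℓ+1}^{k-1}, ‖τ‖_{V_𝒞}=1} { ⟨𝒞σ_ℓ, τ−π_ℓτ⟩ − ⟨d(τ−π_ℓτ), u_ℓ⟩ } + sup_{v ∈ V_{ℓ+1}^{k}, ‖v‖_V=1} { ⟨f−dσ_ℓ, v−π_ℓ v⟩ − ⟨du_ℓ, d(v−π_ℓ v)⟩ }. -/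
/-!
Since the level `ℓ+1` problem may be tested with any `τ`, `v` on level `ℓ+1`, linearity gives
`B(σ_{ℓ+1} - σ_ℓ, u_{ℓ+1} - u_ℓ; τ, v) = -F(τ) + G(v)`, where
`F(τ) = ⟨𝒞σ_ℓ, τ⟩ - ⟨dτ, u_ℓ⟩` and `G(v) = ⟨f - dσ_ℓ, v⟩ - ⟨du_ℓ, dv⟩` are the residuals of the
coarse solution. Both residuals vanish on level `ℓ` (Galerkin orthogonality), so
`F(τ) = F(τ - π_ℓ τ)` and `G(v) = G(v - π_ℓ v)`. As `F` and `G` are bounded functionals, they are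
controlled by their suprema over unit spheres (`abs_le_sSup_mul`), whence
`B / (‖τ‖_{V_𝒞} + ‖v‖_V) ≤ sup F + sup G`, and the inf-sup condition finishes the proof.
-/

open scoped RealInnerProductSpace

noncomputable section

/-- The graph norm `‖v‖_V = √(‖v‖² + ‖dv‖²)` on the domain `V` of a densely defined
operator `d`. -/
def graphNorm {W W' : Type*} [NormedAddCommGroup W] [InnerProductSpace ℝ W]
    [NormedAddCommGroup W'] [InnerProductSpace ℝ W']
    (V : Submodule ℝ W) (d : V →ₗ[ℝ] W') (v : V) : ℝ :=
  Real.sqrt (‖(v : W)‖ ^ 2 + ‖d v‖ ^ 2)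

/-- The norm `‖τ‖_{V_𝒞} = √(⟨𝒞τ,τ⟩ + ‖dτ‖²)`. -/
def cNorm {W W' : Type*} [NormedAddCommGroup W] [InnerProductSpace ℝ W]
    [NormedAddCommGroup W'] [InnerProductSpace ℝ W']
    (C : W →L[ℝ] W) (V : Submodule ℝ W) (d : V →ₗ[ℝ] W') (τ : V) : ℝ :=
  Real.sqrt (⟪C (τ : W), (τ : W)⟫ + ‖d τ‖ ^ 2)

/-- The mixed bilinear form
`B(σ,u;τ,v) = ⟨𝒞σ,τ⟩ − ⟨dτ,u⟩ + ⟨dσ,v⟩ + ⟨du,dv⟩`. -/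
def Bform {Wkm1 Wk Wk1 : Type*}
    [NormedAddCommGroup Wkm1] [InnerProductSpace ℝ Wkm1]
    [NormedAddCommGroup Wk] [InnerProductSpace ℝ Wk]
    [NormedAddCommGroup Wk1] [InnerProductSpace ℝ Wk1]
    (C : Wkm1 →L[ℝ] Wkm1) (Vkm1 : Submodule ℝ Wkm1) (Vk : Submodule ℝ Wk)
    (dkm1 : Vkm1 →ₗ[ℝ] Wk) (dk : Vk →ₗ[ℝ] Wk1)
    (σ τ : Vkm1) (u v : Vk) : ℝ :=
  ⟪C (σ : Wkm1), (τ : Wkm1)⟫ - ⟪dkm1 τ, (u : Wk)⟫ + ⟪dkm1 σ, (v : Wk)⟫ + ⟪dk u, dk v⟫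

/-- The supremum of a homogeneous bounded functional `L` over the unit sphere of a subspace `S`
is nonnegative and acts as its dual norm on `S`. The sphere may be empty (`sSup ∅ = 0`); then
`p` vanishes on `S`, and so does `L` by boundedness. -/
theorem abs_le_sSup_mul {V : Type*} [AddCommGroup V] [Module ℝ V] (S : Submodule ℝ V)
    (p L : V → ℝ) (hp0 : ∀ x, 0 ≤ p x) (hp : ∀ (c : ℝ) (x : V), p (c • x) = |c| * p x)
    (hL : ∀ (c : ℝ) (x : V), L (c • x) = c * L x)
    (K : ℝ) (hK : ∀ x, |L x| ≤ K * p x) :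
    0 ≤ sSup {r : ℝ | ∃ x, x ∈ S ∧ p x = 1 ∧ r = L x} ∧
      ∀ x ∈ S, |L x| ≤ sSup {r : ℝ | ∃ x, x ∈ S ∧ p x = 1 ∧ r = L x} * p x := by
  set T := {r : ℝ | ∃ x, x ∈ S ∧ p x = 1 ∧ r = L x}
  have hbdd : BddAbove T := by
    refine ⟨K, ?_⟩
    rintro r ⟨x, -, hx1, rfl⟩
    have h := hK x
    rw [hx1, mul_one] at h
    exact (le_abs_self _).trans h
  -- The sphere is symmetric, so the supremum also dominates absolute values.
  have hunit : ∀ x ∈ S, p x = 1 → |L x| ≤ sSup T := by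
    intro x hx hx1
    refine abs_le'.2 ⟨le_csSup hbdd ⟨x, hx, hx1, rfl⟩, ?_⟩
    refine le_csSup hbdd ⟨(-1 : ℝ) • x, S.smul_mem _ hx, ?_, ?_⟩
    · rw [hp, hx1]; simp
    · rw [hL]; ring
  refine ⟨?_, fun x hx => ?_⟩
  · rcases T.eq_empty_or_nonempty with h | ⟨r, x, hx, hx1, -⟩
    · rw [h, Real.sSup_empty]
    · exact (abs_nonneg _).trans (hunit x hx hx1)
  · rcases (hp0 x).eq_or_lt with h | h
    · have h' := hK x
      rw [← h, mul_zero] at h' ⊢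
      exact h'
    · have h1 := hunit ((p x)⁻¹ • x) (S.smul_mem _ hx)
        (by rw [hp, abs_of_pos (inv_pos.2 h), inv_mul_cancel₀ h.ne'])
      rw [hL, abs_mul, abs_of_pos (inv_pos.2 h), inv_mul_eq_div, div_le_iff₀ h] at h1
      exact h1

theorem graphNorm_smul {W W' : Type*} [NormedAddCommGroup W] [InnerProductSpace ℝ W]
    [NormedAddCommGroup W'] [InnerProductSpace ℝ W']
    (V : Submodule ℝ W) (d : V →ₗ[ℝ] W') (c : ℝ) (v : V) :
    graphNorm V d (c • v) = |c| * graphNorm V d v := by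
  unfold graphNorm
  rw [← Real.sqrt_sq_eq_abs, ← Real.sqrt_mul (sq_nonneg c)]
  congr 1
  rw [map_smul, Submodule.coe_smul, norm_smul, norm_smul, mul_pow, mul_pow, Real.norm_eq_abs,
    sq_abs]
  ring

theorem cNorm_smul {W W' : Type*} [NormedAddCommGroup W] [InnerProductSpace ℝ W]
    [NormedAddCommGroup W'] [InnerProductSpace ℝ W']
    (C : W →L[ℝ] W) (V : Submodule ℝ W) (d : V →ₗ[ℝ] W') (c : ℝ) (τ : V) :
    cNorm C V d (c • τ) = |c| * cNorm C V d τ := by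
  unfold cNorm
  rw [← Real.sqrt_sq_eq_abs, ← Real.sqrt_mul (sq_nonneg c)]
  congr 1
  rw [map_smul, Submodule.coe_smul, map_smul, norm_smul, real_inner_smul_left,
    real_inner_smul_right, mul_pow, Real.norm_eq_abs, sq_abs]
  ring

theorem norm_le_graphNorm {W W' : Type*} [NormedAddCommGroup W] [InnerProductSpace ℝ W]
    [NormedAddCommGroup W'] [InnerProductSpace ℝ W']
    (V : Submodule ℝ W) (d : V →ₗ[ℝ] W') (v : V) : ‖(v : W)‖ ≤ graphNorm V d v :=
  Real.le_sqrt_of_sq_le (le_add_of_nonneg_right (sq_nonneg _))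

theorem norm_map_le_graphNorm {W W' : Type*} [NormedAddCommGroup W] [InnerProductSpace ℝ W]
    [NormedAddCommGroup W'] [InnerProductSpace ℝ W']
    (V : Submodule ℝ W) (d : V →ₗ[ℝ] W') (v : V) : ‖d v‖ ≤ graphNorm V d v :=
  Real.le_sqrt_of_sq_le (le_add_of_nonneg_left (sq_nonneg _))

/-- A functional `⟨a, x⟩ - ⟨b, y⟩` is bounded by any quantity controlling `‖x‖` and `‖y‖`. -/
theorem abs_inner_sub_inner_le {W W' : Type*} [NormedAddCommGroup W] [InnerProductSpace ℝ W]
    [NormedAddCommGroup W'] [InnerProductSpace ℝ W'] (a x : W) (b y : W') (K p : ℝ)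
    (hx : ‖x‖ ≤ K * p) (hy : ‖y‖ ≤ p) :
    |⟪a, x⟫ - ⟪b, y⟫| ≤ (‖a‖ * K + ‖b‖) * p := by
  calc |⟪a, x⟫ - ⟪b, y⟫| ≤ |⟪a, x⟫| + |⟪b, y⟫| := abs_sub _ _
    _ ≤ ‖a‖ * ‖x‖ + ‖b‖ * ‖y‖ :=
        add_le_add (abs_real_inner_le_norm _ _) (abs_real_inner_le_norm _ _)
    _ ≤ ‖a‖ * (K * p) + ‖b‖ * p := by gcongr
    _ = (‖a‖ * K + ‖b‖) * p := by ring

/-- **Discrete upper bound via the inf-sup condition (Lemma `absigmau`).**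
Under the abstract Hodge–Laplace setting with two nested finite-dimensional discrete
subcomplexes (level `ℓ` contained in level `ℓ+1`), let `(σℓ,uℓ)` and `(σℓ₁,uℓ₁)` be
the discrete mixed solutions with datum `f`, let `πℓ` be a cochain projection onto the
level-`ℓ` subcomplex, and suppose the discrete inf-sup condition holds on level `ℓ+1`
with constant `C_infsup > 0`.  Then
`C_infsup·(‖σℓ₁−σℓ‖_{V_𝒞} + ‖uℓ₁−uℓ‖_V)
  ≤ sup_{τ ∈ V_{ℓ+1}^{k-1}, ‖τ‖_{V_𝒞}=1} {⟨𝒞σℓ, τ−πℓτ⟩ − ⟨d(τ−πℓτ), uℓ⟩}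
  + sup_{v ∈ V_{ℓ+1}^k, ‖v‖_V=1} {⟨f−dσℓ, v−πℓv⟩ − ⟨duℓ, d(v−πℓv)⟩}`. -/
theorem discrete_upper_bound_mixed_hodge
    {Wkm1 Wk Wk1 : Type*}
    [NormedAddCommGroup Wkm1] [InnerProductSpace ℝ Wkm1] [CompleteSpace Wkm1]
    [NormedAddCommGroup Wk] [InnerProductSpace ℝ Wk] [CompleteSpace Wk]
    [NormedAddCommGroup Wk1] [InnerProductSpace ℝ Wk1] [CompleteSpace Wk1]
    (Vkm1 : Submodule ℝ Wkm1) (Vk : Submodule ℝ Wk)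
    (dkm1 : Vkm1 →ₗ[ℝ] Wk) (dk : Vk →ₗ[ℝ] Wk1)
    (hdense1 : Dense (Vkm1 : Set Wkm1)) (hdense2 : Dense (Vk : Set Wk))
    (hgraph1 : IsClosed {p : Wkm1 × Wk | ∃ τ : Vkm1, p = ((τ : Wkm1), dkm1 τ)})
    (hgraph2 : IsClosed {p : Wk × Wk1 | ∃ v : Vk, p = ((v : Wk), dk v)})
    (hrange1 : IsClosed (Set.range fun τ : Vkm1 => dkm1 τ))
    (hrange2 : IsClosed (Set.range fun v : Vk => dk v))
    (hdd : ∀ τ : Vkm1, dkm1 τ ∈ Vk)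
    (hcomplex : ∀ τ : Vkm1, dk ⟨dkm1 τ, hdd τ⟩ = 0)
    (hharmonic : ∀ v : Vk, dk v = 0 → (∀ τ : Vkm1, ⟪(v : Wk), dkm1 τ⟫ = 0) → v = 0)
    (cP : ℝ) (hcP : 0 < cP)
    (hPoincare1 : ∀ τ : Vkm1,
      (∀ z : Vkm1, dkm1 z = 0 → ⟪(τ : Wkm1), (z : Wkm1)⟫ = 0) →
      graphNorm Vkm1 dkm1 τ ≤ cP * ‖dkm1 τ‖)
    (hPoincare2 : ∀ v : Vk,
      (∀ z : Vk, dk z = 0 → ⟪(v : Wk), (z : Wk)⟫ = 0) →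
      graphNorm Vk dk v ≤ cP * ‖dk v‖)
    (C : Wkm1 →L[ℝ] Wkm1)
    (hCselfadj : ∀ x y : Wkm1, ⟪C x, y⟫ = ⟪x, C y⟫)
    (hCpos : ∀ x : Wkm1, 0 ≤ ⟪C x, x⟫)
    (CC : ℝ) (hCC : 0 < CC)
    (hequiv_low : ∀ τ : Vkm1,
      CC⁻¹ * graphNorm Vkm1 dkm1 τ ^ 2 ≤ ⟪C (τ : Wkm1), (τ : Wkm1)⟫ + ‖dkm1 τ‖ ^ 2)
    (hequiv_up : ∀ τ : Vkm1,
      ⟪C (τ : Wkm1), (τ : Wkm1)⟫ + ‖dkm1 τ‖ ^ 2 ≤ CC * graphNorm Vkm1 dkm1 τ ^ 2)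
    (Vk1 : Submodule ℝ Wk1) (hddk : ∀ v : Vk, dk v ∈ Vk1)
    (f : Wk)
    (Vlkm1 Vl1km1 : Submodule ℝ Wkm1) (Vlk Vl1k : Submodule ℝ Wk)
    (Vlk1 Vl1k1 : Submodule ℝ Wk1)
    (hnest1 : Vlkm1 ≤ Vl1km1) (hnest2 : Vlk ≤ Vl1k) (hnest3 : Vlk1 ≤ Vl1k1)
    (hsub1 : Vl1km1 ≤ Vkm1) (hsub2 : Vl1k ≤ Vk) (hsub3 : Vl1k1 ≤ Vk1)
    (hfd1 : FiniteDimensional ℝ Vl1km1) (hfd2 : FiniteDimensional ℝ Vl1k)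
    (hfd3 : FiniteDimensional ℝ Vl1k1)
    (hdl1 : ∀ τ : Vkm1, (τ : Wkm1) ∈ Vlkm1 → dkm1 τ ∈ Vlk)
    (hdl2 : ∀ v : Vk, (v : Wk) ∈ Vlk → dk v ∈ Vlk1)
    (hdl1' : ∀ τ : Vkm1, (τ : Wkm1) ∈ Vl1km1 → dkm1 τ ∈ Vl1k)
    (hdl2' : ∀ v : Vk, (v : Wk) ∈ Vl1k → dk v ∈ Vl1k1)
    (σl : Vkm1) (ul : Vk) (σl1 : Vkm1) (ul1 : Vk)
    (hσlmem : (σl : Wkm1) ∈ Vlkm1) (hulmem : (ul : Wk) ∈ Vlk)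
    (hσl1mem : (σl1 : Wkm1) ∈ Vl1km1) (hul1mem : (ul1 : Wk) ∈ Vl1k)
    (hsol1 : ∀ τ : Vkm1, (τ : Wkm1) ∈ Vlkm1 →
      ⟪C (σl : Wkm1), (τ : Wkm1)⟫ - ⟪dkm1 τ, (ul : Wk)⟫ = 0)
    (hsol2 : ∀ v : Vk, (v : Wk) ∈ Vlk →
      ⟪dkm1 σl, (v : Wk)⟫ + ⟪dk ul, dk v⟫ = ⟪f, (v : Wk)⟫)
    (hsol1' : ∀ τ : Vkm1, (τ : Wkm1) ∈ Vl1km1 →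
      ⟪C (σl1 : Wkm1), (τ : Wkm1)⟫ - ⟪dkm1 τ, (ul1 : Wk)⟫ = 0)
    (hsol2' : ∀ v : Vk, (v : Wk) ∈ Vl1k →
      ⟪dkm1 σl1, (v : Wk)⟫ + ⟪dk ul1, dk v⟫ = ⟪f, (v : Wk)⟫)
    (πkm1 : Vkm1 →ₗ[ℝ] Vkm1) (πk : Vk →ₗ[ℝ] Vk) (πk1 : Vk1 →ₗ[ℝ] Vk1)
    (hπmem1 : ∀ τ : Vkm1, (πkm1 τ : Wkm1) ∈ Vlkm1)
    (hπmem2 : ∀ v : Vk, (πk v : Wk) ∈ Vlk)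
    (hπmem3 : ∀ z : Vk1, (πk1 z : Wk1) ∈ Vlk1)
    (hπid1 : ∀ τ : Vkm1, (τ : Wkm1) ∈ Vlkm1 → πkm1 τ = τ)
    (hπid2 : ∀ v : Vk, (v : Wk) ∈ Vlk → πk v = v)
    (hπid3 : ∀ z : Vk1, (z : Wk1) ∈ Vlk1 → πk1 z = z)
    (hπcomm1 : ∀ τ : Vkm1, dkm1 (πkm1 τ) = (↑(πk ⟨dkm1 τ, hdd τ⟩) : Wk))
    (hπcomm2 : ∀ v : Vk, dk (πk v) = (↑(πk1 ⟨dk v, hddk v⟩) : Wk1))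
    (Cinfsup : ℝ) (hCis : 0 < Cinfsup)
    (hinfsup : ∀ (ξ : Vkm1) (w : Vk), (ξ : Wkm1) ∈ Vl1km1 → (w : Wk) ∈ Vl1k →
      Cinfsup * (cNorm C Vkm1 dkm1 ξ + graphNorm Vk dk w) ≤
        sSup {r : ℝ | ∃ (τ : Vkm1) (v : Vk),
          (τ : Wkm1) ∈ Vl1km1 ∧ (v : Wk) ∈ Vl1k ∧ ¬(τ = 0 ∧ v = 0) ∧
          r = Bform C Vkm1 Vk dkm1 dk ξ τ w v /
            (cNorm C Vkm1 dkm1 τ + graphNorm Vk dk v)}) :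
    Cinfsup * (cNorm C Vkm1 dkm1 (σl1 - σl) + graphNorm Vk dk (ul1 - ul)) ≤
      sSup {r : ℝ | ∃ τ : Vkm1, (τ : Wkm1) ∈ Vl1km1 ∧ cNorm C Vkm1 dkm1 τ = 1 ∧
          r = ⟪C (σl : Wkm1), ((τ - πkm1 τ : Vkm1) : Wkm1)⟫ -
            ⟪dkm1 (τ - πkm1 τ), (ul : Wk)⟫} +
      sSup {r : ℝ | ∃ v : Vk, (v : Wk) ∈ Vl1k ∧ graphNorm Vk dk v = 1 ∧
          r = ⟪f - dkm1 σl, ((v - πk v : Vk) : Wk)⟫ -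
            ⟪dk ul, dk (v - πk v)⟫} := by
  -- `F` and `G` are the residuals of the level `ℓ` solution; both vanish on level `ℓ`.
  set F : Vkm1 → ℝ := fun τ => ⟪C (σl : Wkm1), (τ : Wkm1)⟫ - ⟪dkm1 τ, (ul : Wk)⟫ with hF
  set G : Vk → ℝ := fun v => ⟪f - dkm1 σl, (v : Wk)⟫ - ⟪dk ul, dk v⟫ with hG
  have hFπ : ∀ τ : Vkm1, ⟪C (σl : Wkm1), ((τ - πkm1 τ : Vkm1) : Wkm1)⟫ -
      ⟪dkm1 (τ - πkm1 τ), (ul : Wk)⟫ = F τ := by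
    intro τ
    have h := hsol1 (πkm1 τ) (hπmem1 τ)
    simp only [hF, Submodule.coe_sub, map_sub, inner_sub_left, inner_sub_right]
    linarith
  have hGπ : ∀ v : Vk, ⟪f - dkm1 σl, ((v - πk v : Vk) : Wk)⟫ -
      ⟪dk ul, dk (v - πk v)⟫ = G v := by
    intro v
    have h := hsol2 (πk v) (hπmem2 v)
    simp only [hG, Submodule.coe_sub, map_sub, inner_sub_left, inner_sub_right]
    linarith
  simp only [hFπ, hGπ]
  have hdc : ∀ τ : Vkm1, ‖dkm1 τ‖ ≤ cNorm C Vkm1 dkm1 τ := fun τ =>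
    Real.le_sqrt_of_sq_le (le_add_of_nonneg_left (hCpos _))
  have hnc : ∀ τ : Vkm1, ‖(τ : Wkm1)‖ ≤ Real.sqrt CC * cNorm C Vkm1 dkm1 τ := by
    intro τ
    refine (norm_le_graphNorm Vkm1 dkm1 τ).trans ?_
    unfold cNorm
    rw [← Real.sqrt_mul hCC.le]
    refine Real.le_sqrt_of_sq_le ?_
    have h := hequiv_low τ
    rwa [inv_mul_le_iff₀ hCC] at h
  obtain ⟨hA0, hA⟩ := abs_le_sSup_mul (Vl1km1.comap Vkm1.subtype) (cNorm C Vkm1 dkm1) F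
    (fun _ => Real.sqrt_nonneg _) (cNorm_smul C Vkm1 dkm1)
    (fun c τ => by
      simp only [hF, Submodule.coe_smul, map_smul, real_inner_smul_left, real_inner_smul_right]
      ring)
    (‖C (σl : Wkm1)‖ * Real.sqrt CC + ‖(ul : Wk)‖)
    (fun τ => by
      simp only [hF]
      rw [real_inner_comm (ul : Wk) (dkm1 τ)]
      exact abs_inner_sub_inner_le _ _ _ _ _ _ (hnc τ) (hdc τ))
  obtain ⟨hB0, hB⟩ := abs_le_sSup_mul (Vl1k.comap Vk.subtype) (graphNorm Vk dk) G
    (fun _ => Real.sqrt_nonneg _) (graphNorm_smul Vk dk)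
    (fun c v => by
      simp only [hG, Submodule.coe_smul, map_smul, real_inner_smul_right]
      ring)
    (‖f - dkm1 σl‖ * 1 + ‖dk ul‖)
    (fun v => abs_inner_sub_inner_le _ _ _ _ _ _
      ((norm_le_graphNorm Vk dk v).trans_eq (one_mul _).symm) (norm_map_le_graphNorm Vk dk v))
  simp only [Submodule.mem_comap, Submodule.subtype_apply] at hA0 hA hB0 hB
  set A := sSup {r : ℝ | ∃ τ : Vkm1, (τ : Wkm1) ∈ Vl1km1 ∧ cNorm C Vkm1 dkm1 τ = 1 ∧ r = F τ}
  set B := sSup {r : ℝ | ∃ v : Vk, (v : Wk) ∈ Vl1k ∧ graphNorm Vk dk v = 1 ∧ r = G v}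
  refine (hinfsup (σl1 - σl) (ul1 - ul) (Vl1km1.sub_mem hσl1mem (hnest1 hσlmem))
    (Vl1k.sub_mem hul1mem (hnest2 hulmem))).trans (Real.sSup_le ?_ (add_nonneg hA0 hB0))
  rintro r ⟨τ, v, hτ, hv, -, rfl⟩
  have hB_eq : Bform C Vkm1 Vk dkm1 dk (σl1 - σl) τ (ul1 - ul) v = -F τ + G v := by
    have h1 := hsol1' τ hτ
    have h2 := hsol2' v hv
    simp only [Bform, hF, hG, Submodule.coe_sub, map_sub, inner_sub_left, inner_sub_right]
    linarith
  have ha : 0 ≤ cNorm C Vkm1 dkm1 τ := Real.sqrt_nonneg _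
  have hb : 0 ≤ graphNorm Vk dk v := Real.sqrt_nonneg _
  refine div_le_of_le_mul₀ (add_nonneg ha hb) (add_nonneg hA0 hB0) ?_
  rw [hB_eq]
  have h1 := (neg_le_abs _).trans (hA τ hτ)
  have h2 := (le_abs_self _).trans (hB v hv)
  linarith [mul_nonneg hA0 hb, mul_nonneg hB0 ha]

end
end

section
/- Weak convergence of Petrov–Galerkin increments: Let 𝒰 and 𝒱 be real Hilbert spaces, ℬ: 𝒰 × 𝒱 → ℝ a bounded bilinear form, and F: 𝒱 → ℝ a bounded linear functional. Let (𝒰_ℓ)_{ℓ≥0} and (𝒱_ℓ)_{ℓ≥0} be sequences of closed subspaces with 𝒰_ℓ ⊆ 𝒰_{ℓ+1} and 𝒱_ℓ ⊆ 𝒱_{ℓ+1} for all ℓ, such that the uniform two-sided discrete inf-sup condition holds with a constant β > 0 independent of ℓ, and let U_ℓ ∈ 𝒰_ℓ be the (unique) Petrov–Galerkin solution of ℬ(U_ℓ,V) = F(V) for all V ∈ 𝒱_ℓ. Define ξ_ℓ = (U_{ℓ+1}−U_ℓ)/‖U_{ℓ+1}−U_ℓ‖ if U_{ℓ+1} ≠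 U_ℓ and ξ_ℓ = 0 otherwise. Then ξ_ℓ converges weakly to 0 in 𝒰 as ℓ → ∞. -/
/-!
Let `X` and `Y` be the closures of `⋃ 𝒰_ℓ` and `⋃ 𝒱_ℓ`, and let `T : X → Y` be the operator with
`⟪T x, y⟫ = ℬ(x, y)`. The uniform inf-sup condition bounds `T` below by `β` on each `𝒰_ℓ`, hence by
density on all of `X`, so `(x, z) ↦ ⟪T x, T z⟫` is coercive on `X`. By Lax–Milgram every functional
`⟪·, w⟫` on `X` has the form `z ↦ ⟪T x, T z⟫ = ℬ(z, T x)`, i.e. it is represented by some `y ∈ Y`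
(`exists_dual_representative`).

It remains to see that `ℬ(ξ_ℓ, y) → 0` for `y ∈ Y`. Galerkin orthogonality gives `ℬ(ξ_ℓ, v) = 0`
for `v ∈ 𝒱_m` and `ℓ ≥ m`, and `‖ξ_ℓ‖ ≤ 1` carries the limit over to the closure
(`tendsto_of_eventually_orthogonal`).
-/

open scoped RealInnerProductSpace
open Filter Topology

/-- The one-sided inf-sup condition on the unit sphere of a subspace gives, by homogeneity, a lower
bound on all of it for any operator `T` representing `ℬ` against test vectors in `R`. -/
lemma infsup_lower_bound {𝒰 𝒱 : Type*}
    [NormedAddCommGroup 𝒰] [InnerProductSpace ℝ 𝒰]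
    [NormedAddCommGroup 𝒱] [InnerProductSpace ℝ 𝒱]
    (ℬ : 𝒰 →L[ℝ] 𝒱 →L[ℝ] ℝ) (S : Submodule ℝ 𝒰) (R : Submodule ℝ 𝒱) {β : ℝ}
    (h : ∀ W ∈ S, ‖W‖ = 1 → β ≤ sSup {r : ℝ | ∃ V ∈ R, ‖V‖ = 1 ∧ r = ℬ W V})
    (T : 𝒰 →L[ℝ] 𝒱) (hT : ∀ W, ∀ V ∈ R, ⟪T W, V⟫ = ℬ W V) :
    ∀ W ∈ S, β * ‖W‖ ≤ ‖T W‖ := by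
  have unit : ∀ W ∈ S, ‖W‖ = 1 → β ≤ ‖T W‖ := by
    intro W hW hn
    refine (h W hW hn).trans (Real.sSup_le ?_ (norm_nonneg _))
    rintro r ⟨V, hV, hV1, rfl⟩
    rw [← hT W V hV]
    simpa [hV1] using real_inner_le_norm (T W) V
  intro W hW
  rcases eq_or_ne W 0 with rfl | hne
  · simp
  have hpos : 0 < ‖W‖ := norm_pos_iff.mpr hne
  have := unit (‖W‖⁻¹ • W) (S.smul_mem _ hW) (by
    rw [norm_smul, norm_inv, norm_norm, inv_mul_cancel₀ hpos.ne'])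
  rw [map_smul, norm_smul, norm_inv, norm_norm] at this
  rwa [← le_div_iff₀ hpos, div_eq_inv_mul]

/-- If `T` is bounded below on a closed subspace `X`, then every functional `⟪·, w⟫` on `X` is of
the form `⟪T x, T ·⟫`. -/
lemma exists_dual_representative {𝒰 𝒱 : Type*}
    [NormedAddCommGroup 𝒰] [InnerProductSpace ℝ 𝒰] [CompleteSpace 𝒰]
    [NormedAddCommGroup 𝒱] [InnerProductSpace ℝ 𝒱]
    (T : 𝒰 →L[ℝ] 𝒱) (X : Submodule ℝ 𝒰) (hX : IsClosed (X : Set 𝒰)) {β : ℝ} (hβ : 0 < β)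
    (h : ∀ x ∈ X, β * ‖x‖ ≤ ‖T x‖) (w : 𝒰) :
    ∃ x, ∀ z ∈ X, ⟪T x, T z⟫ = ⟪z, w⟫ := by
  have : CompleteSpace X := hX.completeSpace_coe
  let a : X →L[ℝ] X →L[ℝ] ℝ :=
    (innerSL ℝ).bilinearComp (T.comp X.subtypeL) (T.comp X.subtypeL)
  have ha : ∀ x z : X, a x z = ⟪T x, T z⟫ := fun x z => rfl
  have hco : IsCoercive a := by
    refine ⟨β * β, by positivity, fun x => ?_⟩
    have hx := h x x.2
    rw [ha, real_inner_self_eq_norm_mul_norm]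
    change β * β * ‖(x : 𝒰)‖ * ‖(x : 𝒰)‖ ≤ _
    calc β * β * ‖(x : 𝒰)‖ * ‖(x : 𝒰)‖ = (β * ‖(x : 𝒰)‖) * (β * ‖(x : 𝒰)‖) := by ring
      _ ≤ _ := mul_le_mul hx hx (by positivity) (norm_nonneg _)
  refine ⟨hco.continuousLinearEquivOfBilin.symm (X.orthogonalProjectionOnto w), fun z hz => ?_⟩
  have := hco.continuousLinearEquivOfBilin_apply
    (hco.continuousLinearEquivOfBilin.symm (X.orthogonalProjectionOnto w)) ⟨z, hz⟩
  rw [ContinuousLinearEquiv.apply_symm_apply, ha] at this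
  rw [← this, real_inner_comm]
  exact Submodule.inner_orthogonalProjectionOnto_eq_of_mem_left ⟨z, hz⟩ w

/-- A bounded sequence that is eventually `ℬ`-orthogonal to each `𝒱_m` becomes `ℬ`-orthogonal in the
limit to the closure of `⋃ 𝒱_m`. -/
lemma tendsto_of_eventually_orthogonal {𝒰 𝒱 : Type*}
    [NormedAddCommGroup 𝒰] [InnerProductSpace ℝ 𝒰]
    [NormedAddCommGroup 𝒱] [InnerProductSpace ℝ 𝒱]
    (ℬ : 𝒰 →L[ℝ] 𝒱 →L[ℝ] ℝ) (𝒱s : ℕ → Submodule ℝ 𝒱) (hmono : Monotone 𝒱s)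
    (ξ : ℕ → 𝒰) (hξ : ∀ ℓ, ‖ξ ℓ‖ ≤ 1) (horth : ∀ ℓ, ∀ V ∈ 𝒱s ℓ, ℬ (ξ ℓ) V = 0)
    (y : 𝒱) (hy : y ∈ (⨆ ℓ, 𝒱s ℓ).topologicalClosure) :
    Tendsto (fun ℓ => ℬ (ξ ℓ) y) atTop (𝓝 0) := by
  rw [Metric.tendsto_atTop]
  intro ε hε
  have hC : 0 < ‖ℬ‖ + 1 := by positivity
  obtain ⟨v, hv, hyv⟩ := Metric.mem_closure_iff.mp hy (ε / (‖ℬ‖ + 1)) (by positivity)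
  obtain ⟨m, hm⟩ := (Submodule.mem_iSup_of_directed _ hmono.directed_le).mp hv
  refine ⟨m, fun ℓ hℓ => ?_⟩
  have h0 : ℬ (ξ ℓ) y = ℬ (ξ ℓ) (y - v) := by
    rw [map_sub, horth ℓ v (hmono hℓ hm), sub_zero]
  rw [dist_zero_right, h0]
  rw [dist_eq_norm, lt_div_iff₀ hC] at hyv
  calc ‖ℬ (ξ ℓ) (y - v)‖ ≤ ‖ℬ‖ * ‖ξ ℓ‖ * ‖y - v‖ := ℬ.le_opNorm₂ _ _
    _ ≤ ‖ℬ‖ * 1 * ‖y - v‖ := by gcongr; exact hξ ℓ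
    _ ≤ ‖y - v‖ * (‖ℬ‖ + 1) := by nlinarith [norm_nonneg (y - v)]
    _ < ε := hyv

/-- **Weak convergence of Petrov–Galerkin increments.**  Let `𝒰, 𝒱` be real Hilbert
spaces, `ℬ` a bounded bilinear form, `F` a bounded linear functional, and
`(𝒰_ℓ), (𝒱_ℓ)` nested sequences of closed subspaces satisfying the uniform two-sided
discrete inf-sup condition with constant `β > 0`.  If `U_ℓ ∈ 𝒰_ℓ` solves the discrete
Petrov–Galerkin problem, then the normalized increments
`ξ_ℓ = (U_{ℓ+1}−U_ℓ)/‖U_{ℓ+1}−U_ℓ‖` (set `ξ_ℓ = 0` when `U_{ℓ+1} = U_ℓ`) converge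
weakly to `0` in `𝒰`. -/
theorem weak_convergence_petrov_galerkin_increments
    {𝒰 𝒱 : Type*}
    [NormedAddCommGroup 𝒰] [InnerProductSpace ℝ 𝒰] [CompleteSpace 𝒰]
    [NormedAddCommGroup 𝒱] [InnerProductSpace ℝ 𝒱] [CompleteSpace 𝒱]
    (ℬ : 𝒰 →L[ℝ] 𝒱 →L[ℝ] ℝ) (F : 𝒱 →L[ℝ] ℝ)
    (𝒰s : ℕ → Submodule ℝ 𝒰) (𝒱s : ℕ → Submodule ℝ 𝒱)
    (h𝒰closed : ∀ ℓ, IsClosed (𝒰s ℓ : Set 𝒰)) (h𝒱closed : ∀ ℓ, IsClosed (𝒱s ℓ : Set 𝒱))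
    (h𝒰nested : ∀ ℓ, 𝒰s ℓ ≤ 𝒰s (ℓ + 1)) (h𝒱nested : ∀ ℓ, 𝒱s ℓ ≤ 𝒱s (ℓ + 1))
    (β : ℝ) (hβ : 0 < β)
    (hinfsup₁ : ∀ ℓ, ∀ W ∈ 𝒰s ℓ, ‖W‖ = 1 →
      β ≤ sSup {r : ℝ | ∃ V ∈ 𝒱s ℓ, ‖V‖ = 1 ∧ r = ℬ W V})
    (hinfsup₂ : ∀ ℓ, ∀ V ∈ 𝒱s ℓ, ‖V‖ = 1 →
      β ≤ sSup {r : ℝ | ∃ W ∈ 𝒰s ℓ, ‖W‖ = 1 ∧ r = ℬ W V})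
    (U : ℕ → 𝒰) (hUmem : ∀ ℓ, U ℓ ∈ 𝒰s ℓ)
    (hUsol : ∀ ℓ, ∀ V ∈ 𝒱s ℓ, ℬ (U ℓ) V = F V) :
    ∀ w : 𝒰,
      Tendsto (fun ℓ => ⟪‖U (ℓ + 1) - U ℓ‖⁻¹ • (U (ℓ + 1) - U ℓ), w⟫) atTop (𝓝 0) := by
  intro w
  have h𝒰mono : Monotone 𝒰s := monotone_nat_of_le_succ h𝒰nested
  have h𝒱mono : Monotone 𝒱s := monotone_nat_of_le_succ h𝒱nested
  set X := (⨆ ℓ, 𝒰s ℓ).topologicalClosure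
  set Y := (⨆ ℓ, 𝒱s ℓ).topologicalClosure
  have h𝒰X : ∀ ℓ, 𝒰s ℓ ≤ X := fun ℓ =>
    (le_iSup 𝒰s ℓ).trans (Submodule.le_topologicalClosure _)
  have h𝒱Y : ∀ ℓ, 𝒱s ℓ ≤ Y := fun ℓ =>
    (le_iSup 𝒱s ℓ).trans (Submodule.le_topologicalClosure _)
  have : CompleteSpace Y := (Submodule.isClosed_topologicalClosure _).completeSpace_coe
  -- `T u` is the Riesz representative of `ℬ(u, ·)`, projected onto `Y`.
  let T : 𝒰 →L[ℝ] 𝒱 := Y.starProjection.comp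
    ((InnerProductSpace.toDual ℝ 𝒱).symm.toContinuousLinearEquiv.toContinuousLinearMap.comp ℬ)
  have hTY : ∀ u, T u ∈ Y := fun u => Submodule.starProjection_apply_mem _ _
  have hT : ∀ u, ∀ v ∈ Y, ⟪T u, v⟫ = ℬ u v := by
    intro u v hv
    change ⟪Y.starProjection ((InnerProductSpace.toDual ℝ 𝒱).symm (ℬ u)), v⟫ = _
    rw [Submodule.inner_starProjection_left_eq_right,
      Submodule.starProjection_eq_self_iff.mpr hv, InnerProductSpace.toDual_symm_apply]
  have hbelow : ∀ x ∈ X, β * ‖x‖ ≤ ‖T x‖ := by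
    have hcl : IsClosed {x : 𝒰 | β * ‖x‖ ≤ ‖T x‖} :=
      isClosed_le (by fun_prop) (by fun_prop)
    refine fun x hx => closure_minimal (fun u hu => ?_) hcl hx
    obtain ⟨ℓ, hℓ⟩ := (Submodule.mem_iSup_of_directed _ h𝒰mono.directed_le).mp hu
    exact infsup_lower_bound ℬ (𝒰s ℓ) (𝒱s ℓ) (hinfsup₁ ℓ) T
      (fun W V hV => hT W V (h𝒱Y ℓ hV)) u hℓ
  obtain ⟨x, hx⟩ := exists_dual_representative T X (Submodule.isClosed_topologicalClosure _)
    hβ hbelow w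
  have hrep : ∀ z ∈ X, ⟪z, w⟫ = ℬ z (T x) := fun z hz => by
    rw [← hx z hz, real_inner_comm, hT z _ (hTY x)]
  have hmem : ∀ ℓ, ‖U (ℓ + 1) - U ℓ‖⁻¹ • (U (ℓ + 1) - U ℓ) ∈ X := fun ℓ =>
    X.smul_mem _ (X.sub_mem (h𝒰X _ (hUmem _)) (h𝒰X _ (hUmem _)))
  simp_rw [fun ℓ => hrep _ (hmem ℓ)]
  refine tendsto_of_eventually_orthogonal ℬ 𝒱s h𝒱mono _ (fun ℓ => ?_) (fun ℓ V hV => ?_) _ (hTY x)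
  · rw [norm_smul, norm_inv, norm_norm]
    exact inv_mul_le_one
  · simp [hUsol ℓ V hV, hUsol (ℓ + 1) V (h𝒱nested ℓ hV)]
end

section
/- Weak convergence of normalized Galerkin errors: Let 𝒰, 𝒱 be real Hilbert spaces, ℬ: 𝒰 × 𝒱 → ℝ a bounded bilinear form, F: 𝒱 → ℝ a bounded linear functional, and U ∈ 𝒰 the solution of ℬ(U,V) = F(V) for all V ∈ 𝒱. Let (𝒰_ℓ) and (𝒱_ℓ) be nested sequences of closed subspaces (𝒰_ℓ ⊆ 𝒰_{ℓ+1}, 𝒱_ℓ ⊆ 𝒱_{ℓ+1}) satisfying the uniform two-sided discrete inf-sup condition with constant β > 0, and suppose in addition that the closure of the union ∪_ℓ 𝒰_ℓ equals 𝒰. Let U_ℓ ∈ 𝒰_ℓ solve ℬ(U_ℓ,V) = F(V) for all V ∈ 𝒱_ℓ, and define ζ_ℓ = (U−U_ℓ)/‖U−U_ℓ‖ if U ≠ U_ℓ and ζ_ℓ = 0 otherwise. Then ζ_ℓ converges weakly to 0 in 𝒰. -/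
/-!
Let `e ℓ = Uex - U ℓ`. Galerkin orthogonality gives `ℬ (e ℓ) V = 0` for `V ∈ 𝒱s k` and `ℓ ≥ k`,
by nestedness. Through the Riesz representative of `ℬ · V`, this says that the normalized errors
are eventually orthogonal to every element of the subspace
`K = ⨆ k, {Riesz representatives of ℬ · V, V ∈ 𝒱s k}`.
This `K` is dense in `𝒰` although the union of the `𝒱s k` need not be dense in `𝒱`: a vector `w`
orthogonal to `K` satisfies `ℬ w V = 0` for all discrete `V`, and the inf-sup condition on the first
argument, extended from `⋃ ℓ, 𝒰s ℓ` to `𝒰` by density, forces `w = 0`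
(`eq_zero_of_annihilates`). Since the normalized errors are bounded by `1`, orthogonality on the
dense subspace `K` in the limit gives weak convergence
(`tendsto_inner_of_eventually_orthogonal`).
-/


open scoped RealInnerProductSpace
open Filter Topology

/-- The inf-sup condition yields, for each discrete `W`, an almost optimal test vector. The constant
`β / 2` makes room for the supremum not being attained. -/
lemma exists_test_vector {𝒰 𝒱 : Type*}
    [NormedAddCommGroup 𝒰] [InnerProductSpace ℝ 𝒰]
    [NormedAddCommGroup 𝒱] [InnerProductSpace ℝ 𝒱]
    (ℬ : 𝒰 →L[ℝ] 𝒱 →L[ℝ] ℝ) (A : Submodule ℝ 𝒰) (B : Submodule ℝ 𝒱) {β : ℝ} (hβ : 0 < β)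
    (h : ∀ W ∈ A, ‖W‖ = 1 → β ≤ sSup {r : ℝ | ∃ V ∈ B, ‖V‖ = 1 ∧ r = ℬ W V})
    {W : 𝒰} (hW : W ∈ A) (hW0 : W ≠ 0) :
    ∃ V ∈ B, ‖V‖ = 1 ∧ β / 2 * ‖W‖ ≤ ℬ W V := by
  have hpos : 0 < ‖W‖ := norm_pos_iff.mpr hW0
  have h1 := h (‖W‖⁻¹ • W) (A.smul_mem _ hW) (norm_smul_inv_norm (𝕜 := ℝ) hW0)
  -- The supremum of the empty set is `0 < β`, so the set of values is nonempty.
  have hne : {r : ℝ | ∃ V ∈ B, ‖V‖ = 1 ∧ r = ℬ (‖W‖⁻¹ • W) V}.Nonempty := by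
    by_contra hcon
    rw [Set.not_nonempty_iff_eq_empty] at hcon
    rw [hcon, Real.sSup_empty] at h1
    linarith
  obtain ⟨r, ⟨V, hV, hV1, rfl⟩, hr⟩ :=
    exists_lt_of_lt_csSup hne (show β / 2 < _ by linarith)
  refine ⟨V, hV, hV1, ?_⟩
  have h2 : ℬ (‖W‖⁻¹ • W) V = ‖W‖⁻¹ * ℬ W V := by simp
  rw [h2, inv_mul_eq_div, lt_div_iff₀ hpos] at hr
  exact hr.le

/-- The inf-sup condition survives the passage to the closure of `⋃ ℓ, 𝒰s ℓ`: a vector annihilated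
by all discrete test vectors vanishes. -/
lemma eq_zero_of_annihilates {𝒰 𝒱 : Type*}
    [NormedAddCommGroup 𝒰] [InnerProductSpace ℝ 𝒰]
    [NormedAddCommGroup 𝒱] [InnerProductSpace ℝ 𝒱]
    (ℬ : 𝒰 →L[ℝ] 𝒱 →L[ℝ] ℝ) (𝒰s : ℕ → Submodule ℝ 𝒰) (𝒱s : ℕ → Submodule ℝ 𝒱)
    (hdense : Dense (⋃ ℓ, (𝒰s ℓ : Set 𝒰))) {β : ℝ} (hβ : 0 < β)
    (hinfsup : ∀ ℓ, ∀ W ∈ 𝒰s ℓ, ‖W‖ = 1 →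
      β ≤ sSup {r : ℝ | ∃ V ∈ 𝒱s ℓ, ‖V‖ = 1 ∧ r = ℬ W V})
    {w : 𝒰} (hw : ∀ ℓ, ∀ V ∈ 𝒱s ℓ, ℬ w V = 0) : w = 0 := by
  have hclosed : IsClosed {W : 𝒰 | β / 2 * ‖W‖ ≤ ‖ℬ‖ * ‖W - w‖} :=
    isClosed_le (by fun_prop) (by fun_prop)
  have hsub : (⋃ ℓ, (𝒰s ℓ : Set 𝒰)) ⊆ {W : 𝒰 | β / 2 * ‖W‖ ≤ ‖ℬ‖ * ‖W - w‖} := by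
    intro W hW
    obtain ⟨ℓ, hℓ⟩ := Set.mem_iUnion.mp hW
    by_cases hW0 : W = 0
    · subst hW0
      simpa using mul_nonneg (norm_nonneg ℬ) (norm_nonneg w)
    obtain ⟨V, hV, hV1, hle⟩ := exists_test_vector ℬ (𝒰s ℓ) (𝒱s ℓ) hβ (hinfsup ℓ) hℓ hW0
    calc β / 2 * ‖W‖ ≤ ℬ W V := hle
      _ = ℬ (W - w) V := by simp [hw ℓ V hV]
      _ ≤ ‖ℬ (W - w) V‖ := Real.le_norm_self _
      _ ≤ ‖ℬ‖ * ‖W - w‖ * ‖V‖ := ℬ.le_opNorm₂ _ _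
      _ = ‖ℬ‖ * ‖W - w‖ := by rw [hV1, mul_one]
  -- By density the estimate holds for `W = w`, where its right-hand side is zero.
  have hmem : β / 2 * ‖w‖ ≤ ‖ℬ‖ * ‖w - w‖ := closure_minimal hsub hclosed (hdense w)
  rw [sub_self, norm_zero, mul_zero] at hmem
  have : ‖w‖ ≤ 0 := by
    by_contra! hcon
    have := mul_pos (half_pos hβ) hcon
    linarith
  exact norm_le_zero_iff.mp this

lemma tendsto_inner_of_eventually_orthogonal {H : Type*}
    [NormedAddCommGroup H] [InnerProductSpace ℝ H] (ζ : ℕ → H) (hζ : ∀ n, ‖ζ n‖ ≤ 1)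
    {D : Set H} (hD : Dense D) (horth : ∀ k ∈ D, ∀ᶠ n in atTop, ⟪ζ n, k⟫ = 0) (w : H) :
    Tendsto (fun n => ⟪ζ n, w⟫) atTop (𝓝 0) := by
  rw [Metric.tendsto_nhds]
  intro ε hε
  obtain ⟨k, hk, hdist⟩ := hD.exists_dist_lt w hε
  filter_upwards [horth k hk] with n hn
  calc dist ⟪ζ n, w⟫ 0 = ‖⟪ζ n, w - k⟫‖ := by rw [inner_sub_right, hn, sub_zero, dist_zero_right]
    _ ≤ ‖ζ n‖ * ‖w - k‖ := norm_inner_le_norm _ _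
    _ ≤ 1 * ‖w - k‖ := by gcongr; exact hζ n
    _ < ε := by rwa [one_mul, ← dist_eq_norm]

/-- **Weak convergence of normalized Galerkin errors.**  Let `𝒰, 𝒱` be real Hilbert
spaces, `ℬ` a bounded bilinear form, `F` a bounded linear functional, `U` the exact
solution of `ℬ(U,V) = F(V)` for all `V`, and `(𝒰_ℓ), (𝒱_ℓ)` nested sequences of closed
subspaces satisfying the uniform two-sided discrete inf-sup condition with constant
`β > 0`, with `closure (⋃ ℓ, 𝒰_ℓ) = 𝒰`.  If `U_ℓ ∈ 𝒰_ℓ` solves the discrete problem,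
then `ζ_ℓ = (U−U_ℓ)/‖U−U_ℓ‖` (set `ζ_ℓ = 0` when `U_ℓ = U`) converges weakly to `0`. -/
theorem weak_convergence_normalized_galerkin_errors
    {𝒰 𝒱 : Type*}
    [NormedAddCommGroup 𝒰] [InnerProductSpace ℝ 𝒰] [CompleteSpace 𝒰]
    [NormedAddCommGroup 𝒱] [InnerProductSpace ℝ 𝒱] [CompleteSpace 𝒱]
    (ℬ : 𝒰 →L[ℝ] 𝒱 →L[ℝ] ℝ) (F : 𝒱 →L[ℝ] ℝ)
    (𝒰s : ℕ → Submodule ℝ 𝒰) (𝒱s : ℕ → Submodule ℝ 𝒱)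
    (h𝒰closed : ∀ ℓ, IsClosed (𝒰s ℓ : Set 𝒰)) (h𝒱closed : ∀ ℓ, IsClosed (𝒱s ℓ : Set 𝒱))
    (h𝒰nested : ∀ ℓ, 𝒰s ℓ ≤ 𝒰s (ℓ + 1)) (h𝒱nested : ∀ ℓ, 𝒱s ℓ ≤ 𝒱s (ℓ + 1))
    (hdense : Dense (⋃ ℓ, (𝒰s ℓ : Set 𝒰)))
    (β : ℝ) (hβ : 0 < β)
    (hinfsup₁ : ∀ ℓ, ∀ W ∈ 𝒰s ℓ, ‖W‖ = 1 →
      β ≤ sSup {r : ℝ | ∃ V ∈ 𝒱s ℓ, ‖V‖ = 1 ∧ r = ℬ W V})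
    (hinfsup₂ : ∀ ℓ, ∀ V ∈ 𝒱s ℓ, ‖V‖ = 1 →
      β ≤ sSup {r : ℝ | ∃ W ∈ 𝒰s ℓ, ‖W‖ = 1 ∧ r = ℬ W V})
    (Uex : 𝒰) (hUex : ∀ V : 𝒱, ℬ Uex V = F V)
    (U : ℕ → 𝒰) (hUmem : ∀ ℓ, U ℓ ∈ 𝒰s ℓ)
    (hUsol : ∀ ℓ, ∀ V ∈ 𝒱s ℓ, ℬ (U ℓ) V = F V) :
    ∀ w : 𝒰,
      Tendsto (fun ℓ => ⟪‖Uex - U ℓ‖⁻¹ • (Uex - U ℓ), w⟫) atTop (𝓝 0) := by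
  -- `T V` is the Riesz representative of the functional `ℬ · V`.
  let T : 𝒱 →ₗ[ℝ] 𝒰 :=
    { toFun := fun V => (InnerProductSpace.toDual ℝ 𝒰).symm (ℬ.flip V)
      map_add' := by intro x y; simp
      map_smul' := by intro c x; simp }
  have hT : ∀ x V, ⟪x, T V⟫ = ℬ x V := by
    intro x V
    rw [real_inner_comm]
    exact InnerProductSpace.toDual_symm_apply
  let K : Submodule ℝ 𝒰 := ⨆ k, (𝒱s k).map T
  have hKdense : Dense (K : Set 𝒰) := by
    rw [Submodule.dense_iff_topologicalClosure_eq_top, Submodule.topologicalClosure_eq_top_iff,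
      Submodule.eq_bot_iff]
    intro w hw
    refine eq_zero_of_annihilates ℬ 𝒰s 𝒱s hdense hβ hinfsup₁ fun ℓ V hV => ?_
    rw [← hT]
    exact Submodule.inner_left_of_mem_orthogonal
      (Submodule.mem_iSup_of_mem ℓ (Submodule.mem_map_of_mem hV)) hw
  refine tendsto_inner_of_eventually_orthogonal _ (fun ℓ => ?_) hKdense fun k hk => ?_
  · rw [norm_smul, norm_inv, norm_norm]
    exact inv_mul_le_one
  · refine Submodule.iSup_induction (fun k => (𝒱s k).map T)
      (motive := fun k => ∀ᶠ ℓ in atTop, ⟪‖Uex - U ℓ‖⁻¹ • (Uex - U ℓ), k⟫ = 0) hk ?_ ?_ ?_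
    · rintro k _ ⟨V, hV, rfl⟩
      filter_upwards [eventually_ge_atTop k] with ℓ hℓ
      have hVℓ : V ∈ 𝒱s ℓ := monotone_nat_of_le_succ h𝒱nested hℓ hV
      rw [real_inner_smul_left, hT, map_sub, ContinuousLinearMap.sub_apply, hUex,
        hUsol ℓ V hVℓ, sub_self, mul_zero]
    · simp
    · intro x y hx hy
      filter_upwards [hx, hy] with ℓ h1 h2
      rw [inner_add_right, h1, h2, add_zero]
end

section
/- Under the abstract Hodge–Laplace setting with a nested sequence of discrete subcomplexes satisfying the uniform discrete inf-sup condition, let (σ_ℓ,u_ℓ) be the discrete mixed solutions with datum f ∈ W^k and set E_ℓ = ‖σ_{ℓ+1}−σ_ℓ‖_{V_𝒞}² + ‖u_{ℓ+1}−u_ℓ‖_V². Then the normalized increments E_ℓ^{-1/2}(σ_{ℓ+1}−σ_ℓ) converge weakly to 0 in the Hilbert space (V^{k-1}, ⟨·,·⟩_V) and E_ℓ^{-1/2}(u_{ℓ+1}−u_ℓ) converge weakly to 0 in (V^k, ⟨·,·⟩_V) as ℓ → ∞, with the convention that the normalized increments are 0 whenever E_ℓ = 0. -/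
/-!
The pair `(τ, v)` is embedded as `(τ, dτ, v, dv)` in the Hilbert space
`H = W^{k-1} × W^k × W^k × W^{k+1}`, where the sum of the squared graph norms becomes the squared
norm of `H` and the mixed form becomes `⟪L x, y⟫` for the bounded operator
`L (s, p, a, q) = (𝒞 s, -a, p, q)`.

By Galerkin orthogonality and nestedness, the normalized increments `e ℓ` form a bounded sequence
with `⟪L (e ℓ), y⟫ = 0` as soon as `y` lies in the discrete space `X ℓ`. The set `G` of all `g`
with `⟪e ℓ, g⟫ → 0` is a closed subspace, by boundedness. It contains the orthogonal complement of
`K = closure (⋃ X ℓ)`, and it contains `L† y` for every `y` in `⋃ X ℓ`. A vector `x` orthogonal to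
`G` therefore lies in `K` and satisfies `⟪L x, y⟫ = 0` for all `y` in `⋃ X ℓ`; approximating `x` by
discrete vectors, the uniform inf-sup condition forces `x = 0`. Hence `G = H`
(`tendsto_inner_zero_of_infsup`).
-/

open scoped RealInnerProductSpace
open Filter Topology

noncomputable section

/-- Weak convergence to zero of a bounded sequence with Galerkin orthogonality. The inf-sup
condition is phrased without a supremum: any bound `M` on the functional `⟪L x, ·⟫` over `X ℓ`
dominates `c * ‖x‖`. -/
theorem tendsto_inner_zero_of_infsup {H : Type*} [NormedAddCommGroup H] [InnerProductSpace ℝ H]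
    [CompleteSpace H] (L : H →L[ℝ] H) (X : ℕ → Submodule ℝ H) (hX : Monotone X)
    (c : ℝ) (hc : 0 < c)
    (his : ∀ ℓ, ∀ x ∈ X ℓ, ∀ M : ℝ, 0 ≤ M → (∀ y ∈ X ℓ, ⟪L x, y⟫ ≤ M * ‖y‖) → c * ‖x‖ ≤ M)
    (e : ℕ → H) (he : ∀ ℓ, e ℓ ∈ X (ℓ + 1)) (R : ℝ) (hR : ∀ ℓ, ‖e ℓ‖ ≤ R)
    (horth : ∀ ℓ, ∀ y ∈ X ℓ, ⟪L (e ℓ), y⟫ = 0) (g : H) :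
    Tendsto (fun ℓ => ⟪e ℓ, g⟫) atTop (𝓝 0) := by
  let G : Submodule ℝ H :=
    { carrier := {g | Tendsto (fun ℓ => ⟪e ℓ, g⟫) atTop (𝓝 0)}
      zero_mem' := by simp
      add_mem' := by
        intro a b ha hb
        simpa [inner_add_right] using Tendsto.add ha hb
      smul_mem' := by
        intro r a ha
        simpa [inner_smul_right] using Tendsto.const_mul r ha }
  have hR0 : 0 ≤ R := (norm_nonneg _).trans (hR 0)
  have hGclosed : G.topologicalClosure ≤ G := by
    intro a ha
    have ha' : a ∈ closure (G : Set H) := ha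
    rw [Metric.mem_closure_iff] at ha'
    change Tendsto (fun ℓ => ⟪e ℓ, a⟫) atTop (𝓝 0)
    rw [Metric.tendsto_atTop]
    intro ε hε
    obtain ⟨b, hb, hab⟩ := ha' (ε / 2 / (R + 1)) (by positivity)
    have hb' : Tendsto (fun ℓ => ⟪e ℓ, b⟫) atTop (𝓝 0) := hb
    rw [Metric.tendsto_atTop] at hb'
    obtain ⟨N, hN⟩ := hb' (ε / 2) (by positivity)
    refine ⟨N, fun n hn => ?_⟩
    have h1 := hN n hn
    rw [dist_zero_right] at h1 ⊢
    rw [dist_eq_norm, lt_div_iff₀ (by positivity)] at hab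
    have h2 : ‖⟪e n, a - b⟫‖ ≤ R * ‖a - b‖ :=
      (norm_inner_le_norm _ _).trans (mul_le_mul_of_nonneg_right (hR n) (norm_nonneg _))
    have h3 : ⟪e n, a⟫ = ⟪e n, a - b⟫ + ⟪e n, b⟫ := by rw [← inner_add_right]; simp
    rw [h3]
    refine (norm_add_le _ _).trans_lt ?_
    nlinarith [norm_nonneg (a - b)]
  have hXK : ∀ ℓ, X ℓ ≤ ⨆ ℓ, X ℓ := fun ℓ => le_iSup X ℓ
  have hbot : Gᗮ = ⊥ := by
    rw [eq_bot_iff]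
    intro x hx
    rw [Submodule.mem_orthogonal] at hx
    have hKG : (⨆ ℓ, X ℓ)ᗮ ≤ G := by
      intro a ha
      have : (fun ℓ => ⟪e ℓ, a⟫) = fun _ => (0 : ℝ) := by
        funext ℓ
        exact (Submodule.mem_orthogonal _ _).1 ha _ (hXK _ (he ℓ))
      change Tendsto (fun ℓ => ⟪e ℓ, a⟫) atTop (𝓝 0)
      rw [this]
      exact tendsto_const_nhds
    have hxK : x ∈ (⨆ ℓ, X ℓ).topologicalClosure := by
      rw [← Submodule.orthogonal_orthogonal_eq_closure, Submodule.mem_orthogonal]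
      exact fun a ha => hx a (hKG ha)
    have hLx : ∀ ℓ, ∀ y ∈ X ℓ, ⟪L x, y⟫ = 0 := by
      intro ℓ y hy
      have hyG : L.adjoint y ∈ G := by
        change Tendsto (fun n => ⟪e n, L.adjoint y⟫) atTop (𝓝 0)
        refine tendsto_const_nhds.congr' ?_
        filter_upwards [eventually_ge_atTop ℓ] with n hn
        rw [ContinuousLinearMap.adjoint_inner_right]
        exact (horth n y (hX hn hy)).symm
      have := hx _ hyG
      rwa [ContinuousLinearMap.adjoint_inner_left, real_inner_comm] at this
    -- For discrete `z` the functional `⟪L z, ·⟫` agrees with `⟪L (z - x), ·⟫` on discrete vectors.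
    have hclose : ∀ z ∈ ⨆ ℓ, X ℓ, c * ‖z‖ ≤ ‖L‖ * ‖z - x‖ := by
      intro z hz
      obtain ⟨ℓ, hℓ⟩ := (Submodule.mem_iSup_of_directed X hX.directed_le).1 hz
      refine his ℓ z hℓ _ (by positivity) fun y hy => ?_
      have : ⟪L z, y⟫ = ⟪L (z - x), y⟫ := by
        rw [map_sub, inner_sub_left, hLx ℓ y hy, sub_zero]
      rw [this]
      exact (real_inner_le_norm _ _).trans
        (mul_le_mul_of_nonneg_right (L.le_opNorm _) (norm_nonneg _))
    have hclosed : IsClosed {z : H | c * ‖z‖ ≤ ‖L‖ * ‖z - x‖} :=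
      isClosed_le (by fun_prop) (by fun_prop)
    have hxx : c * ‖x‖ ≤ ‖L‖ * ‖x - x‖ := closure_minimal hclose hclosed hxK
    rw [sub_self, norm_zero, mul_zero] at hxx
    have : ‖x‖ = 0 := le_antisymm (by nlinarith [norm_nonneg x]) (norm_nonneg x)
    simpa using this
  have htop : G.topologicalClosure = ⊤ := Submodule.topologicalClosure_eq_top_iff.2 hbot
  have : g ∈ G := hGclosed (htop ▸ Submodule.mem_top)
  exact this

/-- The Hilbert space `W^{k-1} × W^k × W^k × W^{k+1}` with the `ℓ²` product norm, containing the
product of the graphs of `d^{k-1}` and `d^k`. -/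
abbrev GraphSpace (A B D : Type*) : Type _ := WithLp 2 (WithLp 2 (A × B) × WithLp 2 (B × D))

/-- The map `(τ, v) ↦ (τ, dτ, v, dv)`. -/
def graphEmb {A B D : Type*}
    [NormedAddCommGroup A] [InnerProductSpace ℝ A]
    [NormedAddCommGroup B] [InnerProductSpace ℝ B]
    [NormedAddCommGroup D] [InnerProductSpace ℝ D]
    {V : Submodule ℝ A} {V' : Submodule ℝ B} (d : V →ₗ[ℝ] B) (d' : V' →ₗ[ℝ] D) :
    V × V' →ₗ[ℝ] GraphSpace A B D where
  toFun p := WithLp.toLp 2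
    (WithLp.toLp 2 ((p.1 : A), d p.1), WithLp.toLp 2 ((p.2 : B), d' p.2))
  map_add' p q := by simp [← WithLp.toLp_add]
  map_smul' r p := by simp [← WithLp.toLp_smul]

/-- The operator `(s, p, a, q) ↦ (𝒞 s, -a, p, q)` representing the mixed form on the ambient
Hilbert space. -/
def mixedOp {A B D : Type*}
    [NormedAddCommGroup A] [InnerProductSpace ℝ A]
    [NormedAddCommGroup B] [InnerProductSpace ℝ B]
    [NormedAddCommGroup D] [InnerProductSpace ℝ D] (C : A →L[ℝ] A) :
    GraphSpace A B D →L[ℝ] GraphSpace A B D where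
  toFun x := WithLp.toLp 2
    (WithLp.toLp 2 (C x.fst.fst, -x.snd.fst), WithLp.toLp 2 (x.fst.snd, x.snd.snd))
  map_add' p q := by simp [← WithLp.toLp_add, add_comm]
  map_smul' r p := by simp [← WithLp.toLp_smul]
  cont := by fun_prop

section
variable {A B D : Type*}
    [NormedAddCommGroup A] [InnerProductSpace ℝ A]
    [NormedAddCommGroup B] [InnerProductSpace ℝ B]
    [NormedAddCommGroup D] [InnerProductSpace ℝ D]
    {V : Submodule ℝ A} {V' : Submodule ℝ B} (d : V →ₗ[ℝ] B) (d' : V' →ₗ[ℝ] D)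

theorem graphEmb_apply (p : V × V') : graphEmb d d' p = WithLp.toLp 2
    (WithLp.toLp 2 ((p.1 : A), d p.1), WithLp.toLp 2 ((p.2 : B), d' p.2)) := rfl

theorem mixedOp_apply (C : A →L[ℝ] A) (x : GraphSpace A B D) : mixedOp C x = WithLp.toLp 2
    (WithLp.toLp 2 (C x.fst.fst, -x.snd.fst), WithLp.toLp 2 (x.fst.snd, x.snd.snd)) := rfl

theorem inner_graphEmb (p q : V × V') :
    ⟪graphEmb d d' p, graphEmb d d' q⟫ =
      (⟪(p.1 : A), (q.1 : A)⟫ + ⟪d p.1, d q.1⟫) + (⟪(p.2 : B), (q.2 : B)⟫ + ⟪d' p.2, d' q.2⟫) := by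
  simp [graphEmb_apply]

/-- On embedded pairs, `mixedOp` represents the mixed bilinear form. -/
theorem inner_mixedOp_graphEmb (C : A →L[ℝ] A) (p q : V × V') :
    ⟪mixedOp C (graphEmb d d' p), graphEmb d d' q⟫ = Bform C V V' d d' p.1 q.1 p.2 q.2 := by
  simp [graphEmb_apply, mixedOp_apply, Bform, real_inner_comm (p.2 : B)]
  ring

theorem norm_graphEmb_sq (p : V × V') :
    ‖graphEmb d d' p‖ ^ 2 = graphNorm V d p.1 ^ 2 + graphNorm V' d' p.2 ^ 2 := by
  rw [← real_inner_self_eq_norm_sq, inner_graphEmb, graphNorm, graphNorm,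
    Real.sq_sqrt (by positivity), Real.sq_sqrt (by positivity)]
  simp only [real_inner_self_eq_norm_sq]

/-- The norm in which the inf-sup condition is stated controls the ambient Hilbert norm. -/
theorem norm_graphEmb_le (C : A →L[ℝ] A) (hCpos : ∀ x : A, 0 ≤ ⟪C x, x⟫) (K : ℝ) (hK : 1 ≤ K)
    (hlow : ∀ τ : V, graphNorm V d τ ^ 2 ≤ K * (⟪C (τ : A), (τ : A)⟫ + ‖d τ‖ ^ 2))
    (p : V × V') :
    ‖graphEmb d d' p‖ ≤ K * (cNorm C V d p.1 + graphNorm V' d' p.2) := by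
  have h1 : 0 ≤ cNorm C V d p.1 := Real.sqrt_nonneg _
  have h2 : 0 ≤ graphNorm V' d' p.2 := Real.sqrt_nonneg _
  have h3 : cNorm C V d p.1 ^ 2 = ⟪C (p.1 : A), (p.1 : A)⟫ + ‖d p.1‖ ^ 2 :=
    Real.sq_sqrt (add_nonneg (hCpos _) (by positivity))
  have h4 := hlow p.1
  rw [← h3] at h4
  have h5 : K ≤ K ^ 2 := by nlinarith
  refine le_of_sq_le_sq ?_ (by positivity)
  rw [norm_graphEmb_sq]
  calc graphNorm V d p.1 ^ 2 + graphNorm V' d' p.2 ^ 2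
      ≤ K ^ 2 * cNorm C V d p.1 ^ 2 + K ^ 2 * graphNorm V' d' p.2 ^ 2 := by
        gcongr
        · exact h4.trans (by gcongr)
        · nlinarith [sq_nonneg (graphNorm V' d' p.2)]
    _ ≤ (K * (cNorm C V d p.1 + graphNorm V' d' p.2)) ^ 2 := by
        have : 0 ≤ K ^ 2 * (cNorm C V d p.1 * graphNorm V' d' p.2) := by positivity
        nlinarith

end

/-- **Weak convergence of normalized discrete increments (Corollary `weakHL`).**
Under the abstract Hodge–Laplace setting with a nested sequence of finite-dimensional
discrete subcomplexes satisfying the uniform discrete inf-sup condition, let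
`(σℓ,uℓ)` be the discrete mixed solutions with datum `f ∈ W^k` and
`E_ℓ = ‖σ_{ℓ+1}−σ_ℓ‖²_{V_𝒞} + ‖u_{ℓ+1}−u_ℓ‖²_V`.  Then the normalized increments
`E_ℓ^{-1/2}(σ_{ℓ+1}−σ_ℓ)` and `E_ℓ^{-1/2}(u_{ℓ+1}−u_ℓ)` (set to `0` when `E_ℓ = 0`)
converge weakly to `0` in the graph-inner-product spaces `(V^{k-1}, ⟨·,·⟩_V)` and
`(V^k, ⟨·,·⟩_V)` respectively. -/
theorem weak_convergence_normalized_increments_hodge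
    {Wkm1 Wk Wk1 : Type*}
    [NormedAddCommGroup Wkm1] [InnerProductSpace ℝ Wkm1] [CompleteSpace Wkm1]
    [NormedAddCommGroup Wk] [InnerProductSpace ℝ Wk] [CompleteSpace Wk]
    [NormedAddCommGroup Wk1] [InnerProductSpace ℝ Wk1] [CompleteSpace Wk1]
    (Vkm1 : Submodule ℝ Wkm1) (Vk : Submodule ℝ Wk)
    (dkm1 : Vkm1 →ₗ[ℝ] Wk) (dk : Vk →ₗ[ℝ] Wk1)
    (hdense1 : Dense (Vkm1 : Set Wkm1)) (hdense2 : Dense (Vk : Set Wk))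
    (hgraph1 : IsClosed {p : Wkm1 × Wk | ∃ τ : Vkm1, p = ((τ : Wkm1), dkm1 τ)})
    (hgraph2 : IsClosed {p : Wk × Wk1 | ∃ v : Vk, p = ((v : Wk), dk v)})
    (hrange1 : IsClosed (Set.range fun τ : Vkm1 => dkm1 τ))
    (hrange2 : IsClosed (Set.range fun v : Vk => dk v))
    (hdd : ∀ τ : Vkm1, dkm1 τ ∈ Vk)
    (hcomplex : ∀ τ : Vkm1, dk ⟨dkm1 τ, hdd τ⟩ = 0)
    (hharmonic : ∀ v : Vk, dk v = 0 → (∀ τ : Vkm1, ⟪(v : Wk), dkm1 τ⟫ = 0) → v = 0)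
    (cP : ℝ) (hcP : 0 < cP)
    (hPoincare1 : ∀ τ : Vkm1,
      (∀ z : Vkm1, dkm1 z = 0 → ⟪(τ : Wkm1), (z : Wkm1)⟫ = 0) →
      graphNorm Vkm1 dkm1 τ ≤ cP * ‖dkm1 τ‖)
    (hPoincare2 : ∀ v : Vk,
      (∀ z : Vk, dk z = 0 → ⟪(v : Wk), (z : Wk)⟫ = 0) →
      graphNorm Vk dk v ≤ cP * ‖dk v‖)
    (C : Wkm1 →L[ℝ] Wkm1)
    (hCselfadj : ∀ x y : Wkm1, ⟪C x, y⟫ = ⟪x, C y⟫)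
    (hCpos : ∀ x : Wkm1, 0 ≤ ⟪C x, x⟫)
    (CC : ℝ) (hCC : 0 < CC)
    (hequiv_low : ∀ τ : Vkm1,
      CC⁻¹ * graphNorm Vkm1 dkm1 τ ^ 2 ≤ ⟪C (τ : Wkm1), (τ : Wkm1)⟫ + ‖dkm1 τ‖ ^ 2)
    (hequiv_up : ∀ τ : Vkm1,
      ⟪C (τ : Wkm1), (τ : Wkm1)⟫ + ‖dkm1 τ‖ ^ 2 ≤ CC * graphNorm Vkm1 dkm1 τ ^ 2)
    (Vk1 : Submodule ℝ Wk1) (hddk : ∀ v : Vk, dk v ∈ Vk1)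
    (f : Wk)
    (Vl1 : ℕ → Submodule ℝ Wkm1) (Vl2 : ℕ → Submodule ℝ Wk) (Vl3 : ℕ → Submodule ℝ Wk1)
    (hnest1 : ∀ ℓ, Vl1 ℓ ≤ Vl1 (ℓ + 1)) (hnest2 : ∀ ℓ, Vl2 ℓ ≤ Vl2 (ℓ + 1))
    (hnest3 : ∀ ℓ, Vl3 ℓ ≤ Vl3 (ℓ + 1))
    (hsub1 : ∀ ℓ, Vl1 ℓ ≤ Vkm1) (hsub2 : ∀ ℓ, Vl2 ℓ ≤ Vk) (hsub3 : ∀ ℓ, Vl3 ℓ ≤ Vk1)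
    (hfd1 : ∀ ℓ, FiniteDimensional ℝ (Vl1 ℓ)) (hfd2 : ∀ ℓ, FiniteDimensional ℝ (Vl2 ℓ))
    (hfd3 : ∀ ℓ, FiniteDimensional ℝ (Vl3 ℓ))
    (hdl1 : ∀ ℓ, ∀ τ : Vkm1, (τ : Wkm1) ∈ Vl1 ℓ → dkm1 τ ∈ Vl2 ℓ)
    (hdl2 : ∀ ℓ, ∀ v : Vk, (v : Wk) ∈ Vl2 ℓ → dk v ∈ Vl3 ℓ)
    (β : ℝ) (hβ : 0 < β)
    (hinfsup : ∀ ℓ, ∀ (ξ : Vkm1) (w : Vk), (ξ : Wkm1) ∈ Vl1 ℓ → (w : Wk) ∈ Vl2 ℓ →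
      β * (cNorm C Vkm1 dkm1 ξ + graphNorm Vk dk w) ≤
        sSup {r : ℝ | ∃ (τ : Vkm1) (v : Vk),
          (τ : Wkm1) ∈ Vl1 ℓ ∧ (v : Wk) ∈ Vl2 ℓ ∧ ¬(τ = 0 ∧ v = 0) ∧
          r = Bform C Vkm1 Vk dkm1 dk ξ τ w v /
            (cNorm C Vkm1 dkm1 τ + graphNorm Vk dk v)})
    (hinfsup' : ∀ ℓ, ∀ (τ : Vkm1) (v : Vk), (τ : Wkm1) ∈ Vl1 ℓ → (v : Wk) ∈ Vl2 ℓ →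
      β * (cNorm C Vkm1 dkm1 τ + graphNorm Vk dk v) ≤
        sSup {r : ℝ | ∃ (ξ : Vkm1) (w : Vk),
          (ξ : Wkm1) ∈ Vl1 ℓ ∧ (w : Wk) ∈ Vl2 ℓ ∧ ¬(ξ = 0 ∧ w = 0) ∧
          r = Bform C Vkm1 Vk dkm1 dk ξ τ w v /
            (cNorm C Vkm1 dkm1 ξ + graphNorm Vk dk w)})
    (σ : ℕ → Vkm1) (u : ℕ → Vk)
    (hσmem : ∀ ℓ, ((σ ℓ : Vkm1) : Wkm1) ∈ Vl1 ℓ) (humem : ∀ ℓ, ((u ℓ : Vk) : Wk) ∈ Vl2 ℓ)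
    (hsol1 : ∀ ℓ, ∀ τ : Vkm1, (τ : Wkm1) ∈ Vl1 ℓ →
      ⟪C ((σ ℓ : Vkm1) : Wkm1), (τ : Wkm1)⟫ - ⟪dkm1 τ, ((u ℓ : Vk) : Wk)⟫ = 0)
    (hsol2 : ∀ ℓ, ∀ v : Vk, (v : Wk) ∈ Vl2 ℓ →
      ⟪dkm1 (σ ℓ), (v : Wk)⟫ + ⟪dk (u ℓ), dk v⟫ = ⟪f, (v : Wk)⟫)
    (E : ℕ → ℝ)
    (hE : ∀ ℓ, E ℓ = cNorm C Vkm1 dkm1 (σ (ℓ + 1) - σ ℓ) ^ 2 +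
      graphNorm Vk dk (u (ℓ + 1) - u ℓ) ^ 2) :
    (∀ w : Vkm1,
      Tendsto (fun ℓ =>
        ⟪(((Real.sqrt (E ℓ))⁻¹ • (σ (ℓ + 1) - σ ℓ) : Vkm1) : Wkm1), (w : Wkm1)⟫ +
        ⟪dkm1 ((Real.sqrt (E ℓ))⁻¹ • (σ (ℓ + 1) - σ ℓ)), dkm1 w⟫) atTop (𝓝 0)) ∧
    (∀ v : Vk,
      Tendsto (fun ℓ =>
        ⟪(((Real.sqrt (E ℓ))⁻¹ • (u (ℓ + 1) - u ℓ) : Vk) : Wk), (v : Wk)⟫ +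
        ⟪dk ((Real.sqrt (E ℓ))⁻¹ • (u (ℓ + 1) - u ℓ)), dk v⟫) atTop (𝓝 0)) := by
  -- Taking `K ≥ 1` avoids square roots: `max 1 √CC ≤ K` suffices to bound the norm of `(τ, v)` in the
  -- ambient space by `K * (‖τ‖_{V_𝒞} + ‖v‖_V)`.
  set K : ℝ := max 1 CC with hKdef
  have hK1 : 1 ≤ K := le_max_left _ _
  have hK0 : 0 < K := by linarith
  have hlow : ∀ τ : Vkm1, graphNorm Vkm1 dkm1 τ ^ 2 ≤
      K * (⟪C (τ : Wkm1), (τ : Wkm1)⟫ + ‖dkm1 τ‖ ^ 2) := by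
    intro τ
    have h := hequiv_low τ
    rw [inv_mul_le_iff₀ hCC] at h
    exact h.trans (mul_le_mul_of_nonneg_right (le_max_right _ _)
      (add_nonneg (hCpos _) (by positivity)))
  have hnorm := norm_graphEmb_le dkm1 dk C hCpos K hK1 hlow
  let X : ℕ → Submodule ℝ (GraphSpace Wkm1 Wk Wk1) := fun ℓ =>
    (((Vl1 ℓ).comap Vkm1.subtype).prod ((Vl2 ℓ).comap Vk.subtype)).map (graphEmb dkm1 dk)
  have hXmem : ∀ ℓ (τ : Vkm1) (v : Vk), (τ : Wkm1) ∈ Vl1 ℓ → (v : Wk) ∈ Vl2 ℓ →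
      graphEmb dkm1 dk (τ, v) ∈ X ℓ :=
    fun ℓ τ v hτ hv => Submodule.mem_map_of_mem ⟨hτ, hv⟩
  have hX : Monotone X := monotone_nat_of_le_succ fun ℓ =>
    Submodule.map_mono (Submodule.prod_mono (Submodule.comap_mono (hnest1 ℓ))
      (Submodule.comap_mono (hnest2 ℓ)))
  have his : ∀ ℓ, ∀ x ∈ X ℓ, ∀ M : ℝ, 0 ≤ M →
      (∀ y ∈ X ℓ, ⟪mixedOp C x, y⟫ ≤ M * ‖y‖) → β / K ^ 2 * ‖x‖ ≤ M := by
    rintro ℓ _ ⟨⟨ξ, w⟩, ⟨hξ, hw⟩, rfl⟩ M hM hbound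
    have hsup : β * (cNorm C Vkm1 dkm1 ξ + graphNorm Vk dk w) ≤ M * K := by
      refine (hinfsup ℓ ξ w hξ hw).trans (Real.sSup_le ?_ (by positivity))
      rintro r ⟨τ, v, hτ, hv, -, rfl⟩
      have h1 := hbound _ (hXmem ℓ τ v hτ hv)
      rw [inner_mixedOp_graphEmb] at h1
      have h2 := hnorm (τ, v)
      have h0 : 0 ≤ cNorm C Vkm1 dkm1 τ + graphNorm Vk dk v :=
        add_nonneg (Real.sqrt_nonneg _) (Real.sqrt_nonneg _)
      refine div_le_of_le_mul₀ h0 (by positivity) (h1.trans ?_)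
      rw [mul_assoc]
      exact mul_le_mul_of_nonneg_left h2 hM
    have h3 := hnorm (ξ, w)
    rw [div_mul_eq_mul_div, div_le_iff₀ (by positivity)]
    calc β * ‖graphEmb dkm1 dk (ξ, w)‖
        ≤ β * (K * (cNorm C Vkm1 dkm1 ξ + graphNorm Vk dk w)) := by gcongr
      _ = K * (β * (cNorm C Vkm1 dkm1 ξ + graphNorm Vk dk w)) := by ring
      _ ≤ K * (M * K) := by gcongr
      _ = M * K ^ 2 := by ring
  let e : ℕ → GraphSpace Wkm1 Wk Wk1 := fun ℓ =>
    graphEmb dkm1 dk ((Real.sqrt (E ℓ))⁻¹ • (σ (ℓ + 1) - σ ℓ),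
      (Real.sqrt (E ℓ))⁻¹ • (u (ℓ + 1) - u ℓ))
  have heq : ∀ ℓ, e ℓ = (Real.sqrt (E ℓ))⁻¹ •
      graphEmb dkm1 dk (σ (ℓ + 1) - σ ℓ, u (ℓ + 1) - u ℓ) := by
    intro ℓ
    rw [← map_smul]
    rfl
  have he : ∀ ℓ, e ℓ ∈ X (ℓ + 1) := by
    intro ℓ
    rw [heq]
    exact Submodule.smul_mem _ _ (hXmem _ _ _
      (Submodule.sub_mem _ (hσmem (ℓ + 1)) (hnest1 ℓ (hσmem ℓ)))
      (Submodule.sub_mem _ (humem (ℓ + 1)) (hnest2 ℓ (humem ℓ))))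
  have hR : ∀ ℓ, ‖e ℓ‖ ≤ K * 2 := by
    intro ℓ
    have h1 : cNorm C Vkm1 dkm1 (σ (ℓ + 1) - σ ℓ) ≤ Real.sqrt (E ℓ) :=
      Real.le_sqrt_of_sq_le (by rw [hE]; linarith [sq_nonneg (graphNorm Vk dk (u (ℓ + 1) - u ℓ))])
    have h2 : graphNorm Vk dk (u (ℓ + 1) - u ℓ) ≤ Real.sqrt (E ℓ) :=
      Real.le_sqrt_of_sq_le (by
        rw [hE]; linarith [sq_nonneg (cNorm C Vkm1 dkm1 (σ (ℓ + 1) - σ ℓ))])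
    have h3 := hnorm (σ (ℓ + 1) - σ ℓ, u (ℓ + 1) - u ℓ)
    have h4 : ‖graphEmb dkm1 dk (σ (ℓ + 1) - σ ℓ, u (ℓ + 1) - u ℓ)‖ ≤
        K * 2 * Real.sqrt (E ℓ) := by
      refine h3.trans ?_
      rw [mul_assoc]
      exact mul_le_mul_of_nonneg_left (by linarith) hK0.le
    have h0 : 0 ≤ Real.sqrt (E ℓ) := Real.sqrt_nonneg _
    rw [heq, norm_smul, norm_inv, Real.norm_of_nonneg h0, inv_mul_eq_div]
    exact div_le_of_le_mul₀ h0 (by positivity) h4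
  have horth : ∀ ℓ, ∀ y ∈ X ℓ, ⟪mixedOp C (e ℓ), y⟫ = 0 := by
    rintro ℓ _ ⟨⟨τ, v⟩, ⟨hτ, hv⟩, rfl⟩
    have hτ : (τ : Wkm1) ∈ Vl1 ℓ := hτ
    have hv : (v : Wk) ∈ Vl2 ℓ := hv
    rw [heq, map_smul, real_inner_smul_left, inner_mixedOp_graphEmb]
    have a1 := hsol1 ℓ τ hτ
    have a2 := hsol1 (ℓ + 1) τ (hnest1 ℓ hτ)
    have b1 := hsol2 ℓ v hv
    have b2 := hsol2 (ℓ + 1) v (hnest2 ℓ hv)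
    have : Bform C Vkm1 Vk dkm1 dk (σ (ℓ + 1) - σ ℓ) τ (u (ℓ + 1) - u ℓ) v = 0 := by
      simp only [Bform, Submodule.coe_sub, map_sub, inner_sub_left, inner_sub_right]
      linarith
    rw [this, mul_zero]
  have key := tendsto_inner_zero_of_infsup (mixedOp C) X hX (β / K ^ 2) (by positivity) his e he
    (K * 2) hR horth
  constructor
  · intro w
    simpa only [e, inner_graphEmb, Submodule.coe_zero, map_zero, inner_zero_right, add_zero]
      using key (graphEmb dkm1 dk (w, 0))
  · intro v
    simpa only [e, inner_graphEmb, Submodule.coe_zero, map_zero, inner_zero_right, add_zero,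
      zero_add] using key (graphEmb dkm1 dk (0, v))

end
end

section
/- Geometric decay from uniform tail summability: Let (ε_j)_{j≥0} be a sequence of nonnegative reals and C₂ > 0 a constant such that for every ℓ ≥ 0 the tail series ∑_{j=ℓ+1}^{∞} ε_j converges and satisfies ∑_{j=ℓ+1}^{∞} ε_j ≤ C₂·ε_ℓ. Then for all integers ℓ ≥ 0 and m ≥ 1: ε_{ℓ+m} ≤ (1 + C₂^{-1})^{-(m-1)}·C₂·ε_ℓ. In particular, with γ = (1+C₂^{-1})^{-1} ∈ (0,1) and C_conv = (1+C₂^{-1})·C₂, one has ε_{ℓ+m} ≤ C_conv·γ^m·ε_ℓ. -/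
/-!
Write `T ℓ = ∑_{j ≥ ℓ} ε_j`. Since `T ℓ = ε_ℓ + T (ℓ+1)` and `C₂⁻¹ T (ℓ+1) ≤ ε_ℓ`, the tails
contract: `(1 + C₂⁻¹) T (ℓ+1) ≤ T ℓ` (`tail_contract`). Iterating from `T (ℓ+1) ≤ C₂ ε_ℓ` and
bounding a single term by the tail it starts gives the geometric decay.
-/

theorem tail_split {ε : ℕ → ℝ} (hsum : Summable ε) (ℓ : ℕ) :
    ∑' j : ℕ, ε (ℓ + j) = ε ℓ + ∑' j : ℕ, ε (ℓ + 1 + j) := by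
  have hs : Summable fun j => ε (ℓ + j) := hsum.comp_injective (add_right_injective ℓ)
  rw [hs.tsum_eq_zero_add]
  simp only [add_zero, add_assoc, add_comm 1]

theorem tail_contract {ε : ℕ → ℝ} {C₂ : ℝ} (hC₂ : 0 < C₂) (hsum : Summable ε)
    (htail : ∀ ℓ : ℕ, ∑' j : ℕ, ε (ℓ + 1 + j) ≤ C₂ * ε ℓ) (ℓ : ℕ) :
    (1 + C₂⁻¹) * ∑' j : ℕ, ε (ℓ + 1 + j) ≤ ∑' j : ℕ, ε (ℓ + j) := by
  have h : C₂⁻¹ * ∑' j : ℕ, ε (ℓ + 1 + j) ≤ ε ℓ := (inv_mul_le_iff₀ hC₂).2 (htail ℓ)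
  rw [tail_split hsum ℓ]
  linarith

theorem tail_decay {ε : ℕ → ℝ} {C₂ : ℝ} (hC₂ : 0 < C₂) (hsum : Summable ε)
    (htail : ∀ ℓ : ℕ, ∑' j : ℕ, ε (ℓ + 1 + j) ≤ C₂ * ε ℓ) (ℓ k : ℕ) :
    ∑' j : ℕ, ε (ℓ + 1 + k + j) ≤ (1 + C₂⁻¹)⁻¹ ^ k * (C₂ * ε ℓ) := by
  have hq : 0 < 1 + C₂⁻¹ := by positivity
  induction k with
  | zero => simpa using htail ℓ
  | succ k ih =>
    have h := (tail_contract hC₂ hsum htail (ℓ + 1 + k)).trans ih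
    rw [pow_succ', mul_assoc]
    exact (le_inv_mul_iff₀ hq).2 h

/-- **Geometric decay from uniform tail summability.**  Let `(ε_j)` be a nonnegative
summable sequence and `C₂ > 0` with `∑_{j=ℓ+1}^∞ ε_j ≤ C₂·ε_ℓ` for every `ℓ`.  Then for
all `ℓ ≥ 0` and `m ≥ 1`, `ε_{ℓ+m} ≤ (1+C₂⁻¹)^{-(m-1)}·C₂·ε_ℓ`; in particular, with
`γ = (1+C₂⁻¹)⁻¹` and `C_conv = (1+C₂⁻¹)·C₂`, one has `ε_{ℓ+m} ≤ C_conv·γ^m·ε_ℓ`. -/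
theorem geometric_decay_from_tail_summability
    (ε : ℕ → ℝ) (C₂ : ℝ) (hC₂ : 0 < C₂)
    (hnn : ∀ j, 0 ≤ ε j)
    (hsum : Summable ε)
    (htail : ∀ ℓ : ℕ, ∑' j : ℕ, ε (ℓ + 1 + j) ≤ C₂ * ε ℓ) :
    ∀ ℓ m : ℕ, 1 ≤ m →
      ε (ℓ + m) ≤ (1 + C₂⁻¹)⁻¹ ^ (m - 1) * C₂ * ε ℓ ∧
      ε (ℓ + m) ≤ ((1 + C₂⁻¹) * C₂) * (1 + C₂⁻¹)⁻¹ ^ m * ε ℓ := by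
  rintro ℓ (_ | k) hm
  · omega
  have hq : 1 + C₂⁻¹ ≠ 0 := by positivity
  have hterm : ε (ℓ + 1 + k) ≤ ∑' j : ℕ, ε (ℓ + 1 + k + j) := by
    rw [tail_split hsum]
    exact le_add_of_nonneg_right (tsum_nonneg fun _ => hnn _)
  have h : ε (ℓ + (k + 1)) ≤ (1 + C₂⁻¹)⁻¹ ^ k * C₂ * ε ℓ := by
    rw [mul_assoc, show ℓ + (k + 1) = ℓ + 1 + k by omega]
    exact hterm.trans (tail_decay hC₂ hsum htail ℓ k)
  refine ⟨h, h.trans_eq ?_⟩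
  rw [pow_succ, show (1 + C₂⁻¹) * C₂ * ((1 + C₂⁻¹)⁻¹ ^ k * (1 + C₂⁻¹)⁻¹) * ε ℓ
    = ((1 + C₂⁻¹) * (1 + C₂⁻¹)⁻¹) * ((1 + C₂⁻¹)⁻¹ ^ k * C₂ * ε ℓ) by ring,
    mul_inv_cancel₀ hq, one_mul]
end
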